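/- arXiv:1203.3168 — 2 statements merged into one kernel-verified Lean document; each statement's English description precedes it below -/
import Mathlib

section
/- For an alternating (2n+1)×(2n+1) matrix φ over a commutative ring, the adjugate (classical adjoint) of φ equals Y·Yᵀ, where Y_i = (-1)^{i+1} Pf(φ(i)); in particular every entry of adj(φ) is a product of two signed principal Pfaffians of size 2n. -/
open Finset in
/-- The set of permutations of `Fin (2*n)` giving normalized perfect matchings. -/
noncomputable def pfPerms (n : ℕ) : Finset (Equiv.Perm (Fin (2*n))) :=
  Finset.univ.filter (fun σ =>
    (∀ i : Fin n, σ ⟨2*i, by omega⟩ < σ ⟨2*i+1, by omega⟩) ∧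
    (∀ i j : Fin n, i < j → σ ⟨2*(i:ℕ), by omega⟩ < σ ⟨2*(j:ℕ), by omega⟩))

/-- The Pfaffian of a `2n × 2n` matrix, as the signed sum over perfect matchings. -/
noncomputable def pfaffian {R : Type*} [CommRing R] {n : ℕ}
    (A : Matrix (Fin (2*n)) (Fin (2*n)) R) : R :=
  ∑ σ ∈ pfPerms n, (Equiv.Perm.sign σ : ℤ) •
    ∏ i : Fin n, A (σ ⟨2*i, by omega⟩) (σ ⟨2*i+1, by omega⟩)

variable {R : Type*} [CommRing R]

/-- The permutation of `Fin (2 * (n + 1))` fixing `0`, sending `1` to `j.succ` and acting on the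
remaining points as `τ` does after relabelling. -/
def pfPermCons {n : ℕ} (j : Fin (2 * n + 1)) (τ : Equiv.Perm (Fin (2 * n))) :
    Equiv.Perm (Fin (2 * (n + 1))) :=
  Equiv.Perm.decomposeFin.symm
    ((0 : Fin (2 * n + 1 + 1)), j.cycleRange.symm * Equiv.Perm.decomposeFin.symm (0, τ))

section pfPermCons

variable {n : ℕ} (j : Fin (2 * n + 1)) (τ : Equiv.Perm (Fin (2 * n)))

lemma pfPermCons_zero : pfPermCons j τ ⟨0, by omega⟩ = (0 : Fin (2 * n + 1 + 1)) :=
  Equiv.Perm.decomposeFin_symm_apply_zero _ _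

lemma pfPermCons_succ (k : Fin (2 * n + 1)) : pfPermCons j τ (Fin.succ k : Fin (2 * n + 1 + 1)) =
    (Fin.succ (j.cycleRange.symm (Equiv.Perm.decomposeFin.symm (0, τ) k)) :
      Fin (2 * n + 1 + 1)) := by
  refine (Equiv.Perm.decomposeFin_symm_apply_succ _ _ _).trans ?_
  simp

lemma pfPermCons_one : pfPermCons j τ ⟨1, by omega⟩ = (j.succ : Fin (2 * n + 1 + 1)) := by
  refine (pfPermCons_succ j τ 0).trans ?_
  simp

lemma pfPermCons_add_two (k : ℕ) (hk : k < 2 * n) :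
    pfPermCons j τ ⟨k + 2, by omega⟩ =
      ((j.succAbove (τ ⟨k, hk⟩)).succ : Fin (2 * n + 1 + 1)) := by
  refine (pfPermCons_succ j τ (Fin.succ ⟨k, hk⟩)).trans ?_
  rw [Equiv.Perm.decomposeFin_symm_apply_succ]
  simp

lemma sign_pfPermCons :
    Equiv.Perm.sign (pfPermCons j τ) = (-1) ^ (j : ℕ) * Equiv.Perm.sign τ := by
  refine (Equiv.Perm.decomposeFin.symm_sign _ _).trans ?_
  rw [Equiv.Perm.sign_mul, Equiv.Perm.sign_symm, Fin.sign_cycleRange,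
    Equiv.Perm.decomposeFin.symm_sign]
  simp

lemma pfPermCons_mem_iff : pfPermCons j τ ∈ pfPerms (n + 1) ↔ τ ∈ pfPerms n := by
  have key : ∀ a b (ha : a < 2 * n) (hb : b < 2 * n),
      pfPermCons j τ ⟨a + 2, by omega⟩ < pfPermCons j τ ⟨b + 2, by omega⟩ ↔
        τ ⟨a, ha⟩ < τ ⟨b, hb⟩ := by
    intro a b ha hb
    rw [pfPermCons_add_two j τ a ha, pfPermCons_add_two j τ b hb]
    exact Fin.succ_lt_succ_iff.trans (Fin.strictMono_succAbove j).lt_iff_lt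
  simp only [pfPerms, Finset.mem_filter, Finset.mem_univ, true_and]
  constructor
  · rintro ⟨h₁, h₂⟩
    refine ⟨fun i => ?_, fun i k hik => ?_⟩
    · exact (key _ _ _ _).1 (h₁ i.succ)
    · exact (key _ _ _ _).1 (h₂ i.succ k.succ (Fin.succ_lt_succ_iff.2 hik))
  · rintro ⟨h₁, h₂⟩
    refine ⟨fun i => ?_, fun i k hik => ?_⟩
    · refine Fin.cases ?_ (fun i => ?_) i
      · have h := pfPermCons_one j τ
        have h' := pfPermCons_zero j τ
        refine lt_of_eq_of_lt h' (lt_of_lt_of_eq ?_ h.symm)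
        exact Fin.succ_pos j
      · exact (key (2 * i) (2 * i + 1) (by omega) (by omega)).2 (h₁ i)
    · induction k using Fin.cases with
      | zero => exact absurd hik (Fin.not_lt_zero _)
      | succ k =>
        induction i using Fin.cases with
        | zero =>
          refine lt_of_eq_of_lt (pfPermCons_zero j τ)
            (lt_of_lt_of_eq ?_ (pfPermCons_add_two j τ (2 * k) (by omega)).symm)
          exact Fin.succ_pos _
        | succ i =>
          exact (key (2 * i) (2 * k) (by omega) (by omega)).2 (h₂ i k (Fin.succ_lt_succ_iff.1 hik))

end pfPermCons

lemma pfPermCons_injective {n : ℕ} :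
    Function.Injective fun p : Fin (2 * n + 1) × Equiv.Perm (Fin (2 * n)) =>
      pfPermCons p.1 p.2 := by
  rintro ⟨j, τ⟩ ⟨j', τ'⟩ h
  have hp := Prod.ext_iff.1 (Equiv.Perm.decomposeFin.symm.injective h)
  have hj : j = j' := by
    have h₁ := pfPermCons_one j τ
    rw [show pfPermCons j τ = pfPermCons j' τ' from h] at h₁
    exact Fin.succ_injective _ (h₁.symm.trans (pfPermCons_one j' τ'))
  subst hj
  have := Equiv.Perm.decomposeFin.symm.injective (mul_left_cancel hp.2)
  simpa using this

lemma pfPerms_apply_zero {n : ℕ} {σ : Equiv.Perm (Fin (2 * (n + 1)))} (hσ : σ ∈ pfPerms (n + 1)) :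
    σ ⟨0, by omega⟩ = ⟨0, by omega⟩ := by
  simp only [pfPerms, Finset.mem_filter, Finset.mem_univ, true_and] at hσ
  obtain ⟨h₁, h₂⟩ := hσ
  obtain ⟨⟨p, hp⟩, hpσ⟩ := σ.surjective ⟨0, by omega⟩
  have hmin : ∀ x, ¬ σ x < σ ⟨p, hp⟩ := fun x => by
    rw [hpσ]; exact fun h => absurd (Fin.lt_def.1 h) (Nat.not_lt_zero _)
  obtain ⟨i, rfl | rfl⟩ := Nat.even_or_odd' p
  · rcases Nat.eq_zero_or_pos i with rfl | hi
    · exact hpσ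
    · exact absurd (h₂ ⟨0, by omega⟩ ⟨i, by omega⟩ hi) (hmin _)
  · exact absurd (h₁ ⟨i, by omega⟩) (hmin _)

lemma exists_eq_pfPermCons {n : ℕ} {σ : Equiv.Perm (Fin (2 * (n + 1)))}
    (hσ : σ ∈ pfPerms (n + 1)) : ∃ j τ, σ = pfPermCons j τ := by
  have h₀ := pfPerms_apply_zero hσ
  obtain ⟨⟨p, ρ⟩, hρ⟩ :=
    (Equiv.Perm.decomposeFin (n := 2 * n + 1)).symm.surjective
      (show Equiv.Perm (Fin (2 * n + 1 + 1)) from σ)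
  obtain ⟨⟨q, τ⟩, hτ⟩ :=
    (Equiv.Perm.decomposeFin (n := 2 * n)).symm.surjective ((ρ 0).cycleRange * ρ)
  have hp : p = 0 := by
    rw [← Equiv.Perm.decomposeFin_symm_apply_zero p ρ, hρ]
    exact h₀
  have hq : q = 0 := by
    rw [← Equiv.Perm.decomposeFin_symm_apply_zero q τ, hτ]
    simp
  subst hp hq
  refine ⟨ρ 0, τ, ?_⟩
  rw [pfPermCons, hτ]
  refine Eq.trans hρ.symm ?_
  congr 2
  ext k
  simp

/-- Expansion of the Pfaffian along the first row. -/
lemma pfaffian_succ {R : Type*} [CommRing R] {n : ℕ}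
    (A : Matrix (Fin (2 * n + 1 + 1)) (Fin (2 * n + 1 + 1)) R) :
    pfaffian (n := n + 1) A = ∑ j : Fin (2 * n + 1), A 0 j.succ *
      ((-1) ^ (j : ℕ) *
        pfaffian ((A.submatrix Fin.succ Fin.succ).submatrix j.succAbove j.succAbove)) := by
  simp only [pfaffian, Finset.mul_sum]
  rw [← Finset.sum_product']
  symm
  refine Finset.sum_bij (fun p _ => pfPermCons p.1 p.2) ?_ ?_ ?_ ?_
  · rintro ⟨j, τ⟩ h
    exact (pfPermCons_mem_iff j τ).2 (Finset.mem_product.1 h).2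
  · exact fun p _ q _ h => pfPermCons_injective h
  · intro σ hσ
    obtain ⟨j, τ, rfl⟩ := exists_eq_pfPermCons hσ
    exact ⟨(j, τ), Finset.mem_product.2 ⟨Finset.mem_univ _, (pfPermCons_mem_iff j τ).1 hσ⟩, rfl⟩
  · rintro ⟨j, τ⟩ -
    rw [Fin.prod_univ_succ]
    have h₀ : A (pfPermCons j τ ⟨0, by omega⟩) (pfPermCons j τ ⟨1, by omega⟩) = A 0 j.succ := by
      rw [pfPermCons_zero, pfPermCons_one]
    have h₁ : ∀ i : Fin n, A (pfPermCons j τ ⟨2 * i + 2, by omega⟩)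
        (pfPermCons j τ ⟨2 * i + 1 + 2, by omega⟩) =
        A (j.succAbove (τ ⟨2 * i, by omega⟩)).succ
          (j.succAbove (τ ⟨2 * i + 1, by omega⟩)).succ := fun i => by
      rw [pfPermCons_add_two j τ (2 * i) (by omega), pfPermCons_add_two j τ (2 * i + 1) (by omega)]
    refine Eq.trans ?_ (congrArg₂
      (fun x y => ((Equiv.Perm.sign (pfPermCons j τ) : ℤˣ) : ℤ) • (x * y))
      h₀ (Finset.prod_congr rfl fun i _ => h₁ i)).symm
    rw [sign_pfPermCons]
    simp only [zsmul_eq_mul, Matrix.submatrix_apply]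
    push_cast
    ring

lemma pfaffian_map {R S : Type*} [CommRing R] [CommRing S] (f : R →+* S) {n : ℕ}
    (A : Matrix (Fin (2 * n)) (Fin (2 * n)) R) : pfaffian (A.map f) = f (pfaffian A) := by
  simp [pfaffian, map_sum, map_prod]

/-- The determinant of a bordered matrix with vanishing corner. -/
lemma det_eq_neg_sum_adjugate_submatrix_succ {R : Type*} [CommRing R] {m : ℕ}
    (A : Matrix (Fin (m + 1 + 1)) (Fin (m + 1 + 1)) R) (h : A 0 0 = 0) :
    A.det = -∑ j : Fin (m + 1), ∑ i : Fin (m + 1), A 0 j.succ * A i.succ 0 *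
      (A.submatrix Fin.succ Fin.succ).adjugate j i := by
  rw [Matrix.det_succ_row_zero, Fin.sum_univ_succ, h, mul_zero, zero_mul, zero_add,
    ← Finset.sum_neg_distrib]
  refine Finset.sum_congr rfl fun j _ => ?_
  rw [Matrix.det_succ_column_zero, Finset.mul_sum, ← Finset.sum_neg_distrib]
  refine Finset.sum_congr rfl fun i _ => ?_
  rw [Matrix.adjugate_fin_succ_eq_det_submatrix, Matrix.submatrix_submatrix,
    Matrix.submatrix_submatrix]
  have : (j.succ.succAbove ∘ Fin.succ) = (Fin.succ ∘ j.succAbove) := by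
    ext k; simp
  simp only [Matrix.submatrix_apply, this, Fin.val_succ, Fin.succ_succAbove_zero]
  ring

/-- The alternating integer matrix all of whose entries above the diagonal are `1`. -/
def upperOnes (m : ℕ) : Matrix (Fin m) (Fin m) ℤ :=
  Matrix.of fun i j => if i < j then 1 else if j < i then -1 else 0

lemma upperOnes_submatrix {m k : ℕ} {f : Fin k → Fin m} (hf : StrictMono f) :
    (upperOnes m).submatrix f f = upperOnes k := by
  ext i j
  simp [upperOnes, hf.lt_iff_lt]

lemma upperOnes_transpose (m : ℕ) : (upperOnes m).transpose = -upperOnes m := by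
  ext i j
  simp only [upperOnes, Matrix.transpose_apply, Matrix.of_apply, Matrix.neg_apply]
  split_ifs <;> first | rfl | omega

lemma upperOnes_diag (m : ℕ) (i : Fin m) : upperOnes m i i = 0 := by
  simp [upperOnes]

lemma pfaffian_upperOnes (n : ℕ) : pfaffian (upperOnes (2 * n)) = 1 := by
  induction n with
  | zero => simp [pfaffian, pfPerms]
  | succ n ih =>
    refine (pfaffian_succ (upperOnes (2 * n + 1 + 1))).trans ?_
    simp only [upperOnes_submatrix Fin.strictMono_succ,
      upperOnes_submatrix (Fin.strictMono_succAbove _), ih]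
    simp [upperOnes, Fin.sum_neg_one_pow]

lemma det_eq_zero_of_transpose_eq_neg {R : Type*} [CommRing R] [NoZeroDivisors R] [CharZero R]
    {n : ℕ} (φ : Matrix (Fin (2 * n + 1)) (Fin (2 * n + 1)) R) (h : φ.transpose = -φ) :
    φ.det = 0 := by
  have := congrArg Matrix.det h
  rw [Matrix.det_transpose, Matrix.det_neg, Fintype.card_fin,
    Odd.neg_one_pow ⟨n, rfl⟩, neg_one_mul] at this
  exact self_eq_neg.1 this

lemma adjugate_upperOnes {n : ℕ} (i j : Fin (2 * n + 1))
    (hdet : (upperOnes (2 * n)).det = 1) :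
    (upperOnes (2 * n + 1)).adjugate i j = (-1) ^ (i : ℕ) * (-1) ^ (j : ℕ) := by
  set U := upperOnes (2 * n + 1)
  have hmul : U * U.adjugate = 0 := by
    rw [Matrix.mul_adjugate, det_eq_zero_of_transpose_eq_neg U (upperOnes_transpose _), zero_smul]
  have hstep : ∀ k (hk : k + 1 < 2 * n + 1),
      U.adjugate ⟨k + 1, hk⟩ j = -U.adjugate ⟨k, by omega⟩ j := by
    intro k hk
    have h₁ := congrFun (congrFun hmul ⟨k + 1, hk⟩) j
    have h₀ := congrFun (congrFun hmul ⟨k, by omega⟩) j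
    rw [Matrix.mul_apply, Matrix.zero_apply] at h₀ h₁
    have hsub := sub_eq_zero.2 (h₀.trans h₁.symm)
    rw [← Finset.sum_sub_distrib] at hsub
    have hterm : ∀ l : Fin (2 * n + 1),
        U ⟨k, by omega⟩ l * U.adjugate l j - U ⟨k + 1, hk⟩ l * U.adjugate l j =
          (if l = ⟨k, by omega⟩ then U.adjugate l j else 0) +
          (if l = ⟨k + 1, hk⟩ then U.adjugate l j else 0) := by
      intro l
      simp only [U, upperOnes, Matrix.of_apply, Fin.lt_def, Fin.ext_iff]
      split_ifs <;> omega
    rw [Finset.sum_congr rfl fun l _ => hterm l, Finset.sum_add_distrib] at hsub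
    simp only [Finset.sum_ite_eq', Finset.mem_univ, if_true] at hsub
    linarith
  have hpow : ∀ k (hk : k < 2 * n + 1),
      U.adjugate ⟨k, hk⟩ j = (-1) ^ k * U.adjugate ⟨0, by omega⟩ j := by
    intro k
    induction k with
    | zero => simp
    | succ k ih =>
      intro hk
      rw [hstep k hk, ih]
      ring
  have hdiag : U.adjugate j j = 1 := by
    rw [Matrix.adjugate_fin_succ_eq_det_submatrix,
      upperOnes_submatrix (Fin.strictMono_succAbove j), hdet, ← two_mul, pow_mul]
    simp
  have hsq : ((-1 : ℤ) ^ (j : ℕ)) * (-1) ^ (j : ℕ) = 1 := by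
    rw [← mul_pow]; simp
  have hj := hpow j j.2
  have hi := hpow i i.2
  simp only [Fin.eta] at hi hj
  rw [hdiag] at hj
  rw [hi]
  linear_combination (-(-1) ^ (i : ℕ) * U.adjugate ⟨0, by omega⟩ j) * hsq -
    (-1) ^ (i : ℕ) * (-1) ^ (j : ℕ) * hj

/-- A singular matrix over a domain with a nonzero principal cofactor has an adjugate of rank
at most one. -/
lemma adjugate_mul_adjugate_eq_of_det_eq_zero {R : Type*} [CommRing R] [IsDomain R] {m : ℕ}
    (A : Matrix (Fin (m + 1)) (Fin (m + 1)) R) (hA : A.det = 0) (i j : Fin (m + 1))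
    (hi : (A.submatrix i.succAbove i.succAbove).det ≠ 0) :
    A.adjugate i i * A.adjugate j j = A.adjugate i j * A.adjugate j i := by
  have hmul : A * A.adjugate = 0 := by rw [Matrix.mul_adjugate, hA, zero_smul]
  let z : Fin (m + 1) → R := fun k =>
    A.adjugate i i * A.adjugate k j - A.adjugate i j * A.adjugate k i
  have hz : ∀ l, ∑ k, A l k * z k = 0 := by
    intro l
    have h₁ := congrFun (congrFun hmul l) j
    have h₂ := congrFun (congrFun hmul l) i
    rw [Matrix.mul_apply, Matrix.zero_apply] at h₁ h₂
    calc ∑ k, A l k * z k = A.adjugate i i * ∑ k, A l k * A.adjugate k j -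
          A.adjugate i j * ∑ k, A l k * A.adjugate k i := by
          rw [Finset.mul_sum, Finset.mul_sum, ← Finset.sum_sub_distrib]
          exact Finset.sum_congr rfl fun k _ => by simp only [z]; ring
      _ = 0 := by rw [h₁, h₂]; ring
  have hzi : z i = 0 := by simp only [z]; ring
  have hz' : (fun k => z (i.succAbove k)) = 0 := by
    refine Matrix.eq_zero_of_mulVec_eq_zero hi (funext fun l => ?_)
    have := hz (i.succAbove l)
    rw [Fin.sum_univ_succAbove _ i, hzi, mul_zero, zero_add] at this
    exact this
  have hzj : z j = 0 := by
    rcases Fin.eq_self_or_eq_succAbove i j with rfl | ⟨k, rfl⟩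
    · exact hzi
    · exact congrFun hz' k
  exact sub_eq_zero.1 hzj

/-- The alternating matrix whose entries above the diagonal are independent variables. -/
noncomputable def genericAlternating (m : ℕ) :
    Matrix (Fin m) (Fin m) (MvPolynomial (Fin m × Fin m) ℤ) :=
  Matrix.of fun i j =>
    if i < j then MvPolynomial.X (i, j) else if j < i then -MvPolynomial.X (j, i) else 0

lemma genericAlternating_transpose (m : ℕ) :
    (genericAlternating m).transpose = -genericAlternating m := by
  ext1 i j
  simp only [genericAlternating, Matrix.transpose_apply, Matrix.of_apply, Matrix.neg_apply]
  split_ifs <;> first | omega | simp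

lemma genericAlternating_diag (m : ℕ) (i : Fin m) : genericAlternating m i i = 0 := by
  simp [genericAlternating]

/-- Every alternating matrix is a specialization of the generic one. -/
lemma genericAlternating_map {R : Type*} [CommRing R] {m : ℕ} (φ : Matrix (Fin m) (Fin m) R)
    (halt : φ.transpose = -φ) (hdiag : ∀ i, φ i i = 0) :
    (genericAlternating m).map (MvPolynomial.eval₂Hom (Int.castRingHom R) fun p => φ p.1 p.2) =
      φ := by
  ext i j
  rcases lt_trichotomy i j with h | rfl | h
  · simp [genericAlternating, h]
  · simp [genericAlternating, hdiag]
  · have : φ i j = -φ j i := congrFun (congrFun halt j) i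
    simp [genericAlternating, h, h.not_gt, this]

lemma submatrix_transpose_eq_neg {R m k : Type*} [Neg R] {φ : Matrix m m R}
    (halt : φ.transpose = -φ) (f : k → m) :
    (φ.submatrix f f).transpose = -φ.submatrix f f := by
  rw [Matrix.transpose_submatrix, halt]
  rfl

/-- The entries of the adjugate of an odd alternating matrix, given that determinants of
alternating matrices of the preceding even size are squares of Pfaffians. -/
lemma adjugate_of_det_submatrix_eq_sq (n : ℕ)
    (ih : ∀ {S : Type} [CommRing S] (A : Matrix (Fin (2 * n)) (Fin (2 * n)) S),
      A.transpose = -A → (∀ i, A i i = 0) → A.det = pfaffian A ^ 2)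
    {R : Type*} [CommRing R] (φ : Matrix (Fin (2 * n + 1)) (Fin (2 * n + 1)) R)
    (halt : φ.transpose = -φ) (hdiag : ∀ i, φ i i = 0) :
    φ.adjugate = Matrix.vecMulVec
      (fun i : Fin (2 * n + 1) =>
        (-1 : R) ^ (i : ℕ) * pfaffian (φ.submatrix i.succAbove i.succAbove))
      (fun i : Fin (2 * n + 1) =>
        (-1 : R) ^ (i : ℕ) * pfaffian (φ.submatrix i.succAbove i.succAbove)) := by
  let G := genericAlternating (2 * n + 1)
  let Y : Fin (2 * n + 1) → MvPolynomial (Fin (2 * n + 1) × Fin (2 * n + 1)) ℤ := fun i =>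
    (-1) ^ (i : ℕ) * pfaffian (G.submatrix i.succAbove i.succAbove)
  have hGt : G.transpose = -G := genericAlternating_transpose _
  have hG0 : G.det = 0 := det_eq_zero_of_transpose_eq_neg G hGt
  have hGdet : ∀ i : Fin (2 * n + 1), (G.submatrix i.succAbove i.succAbove).det =
      pfaffian (G.submatrix i.succAbove i.succAbove) ^ 2 := fun i =>
    ih _ (submatrix_transpose_eq_neg hGt _) fun _ => genericAlternating_diag _ _
  let e : MvPolynomial (Fin (2 * n + 1) × Fin (2 * n + 1)) ℤ →+* ℤ :=
    MvPolynomial.eval₂Hom (Int.castRingHom ℤ) fun p => upperOnes (2 * n + 1) p.1 p.2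
  have he : G.map e = upperOnes (2 * n + 1) :=
    genericAlternating_map _ (upperOnes_transpose _) (upperOnes_diag _)
  have hepf : ∀ i : Fin (2 * n + 1), e (pfaffian (G.submatrix i.succAbove i.succAbove)) = 1 := by
    intro i
    rw [← pfaffian_map, ← Matrix.submatrix_map, he,
      upperOnes_submatrix (Fin.strictMono_succAbove i), pfaffian_upperOnes]
  have hGne : ∀ i : Fin (2 * n + 1), (G.submatrix i.succAbove i.succAbove).det ≠ 0 := by
    intro i h
    rw [hGdet] at h
    simpa [hepf] using congrArg e h
  have hii : ∀ i, G.adjugate i i = Y i * Y i := by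
    intro i
    rw [Matrix.adjugate_fin_succ_eq_det_submatrix, hGdet]
    ring
  have hsymm : ∀ i j, G.adjugate j i = G.adjugate i j := by
    intro i j
    have h := congrFun (congrFun (Matrix.adjugate_transpose G) i) j
    rw [hGt, ← neg_one_smul (MvPolynomial (Fin (2 * n + 1) × Fin (2 * n + 1)) ℤ) G,
      Matrix.adjugate_smul] at h
    simpa using h
  have headj : ∀ i j : Fin (2 * n + 1),
      e (G.adjugate i j) = (-1) ^ (i : ℕ) * (-1) ^ (j : ℕ) := by
    intro i j
    rw [← adjugate_upperOnes i j
      (by rw [ih _ (upperOnes_transpose _) (upperOnes_diag _), pfaffian_upperOnes, one_pow]),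
      ← he]
    exact congrFun (congrFun (RingHom.map_adjugate e G) i) j
  have hG : ∀ i j, G.adjugate i j = Y i * Y j := by
    intro i j
    have h := adjugate_mul_adjugate_eq_of_det_eq_zero G hG0 i j (hGne i)
    rw [hii, hii, hsymm i j] at h
    have hsq : G.adjugate i j ^ 2 = (Y i * Y j) ^ 2 := by linear_combination -h
    refine (sq_eq_sq_iff_eq_or_eq_neg.1 hsq).resolve_right fun hneg => ?_
    have h' := congrArg e hneg
    simp only [Y, headj, map_neg, map_mul, map_pow, map_one, hepf, mul_one] at h'
    have hne : ((-1 : ℤ) ^ (i : ℕ) * (-1) ^ (j : ℕ)) ≠ 0 := by simp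
    exact hne (self_eq_neg.1 h')
  let f : MvPolynomial (Fin (2 * n + 1) × Fin (2 * n + 1)) ℤ →+* R :=
    MvPolynomial.eval₂Hom (Int.castRingHom R) fun p => φ p.1 p.2
  have hf : G.map f = φ := genericAlternating_map φ halt hdiag
  have hfpf : ∀ i : Fin (2 * n + 1), f (pfaffian (G.submatrix i.succAbove i.succAbove)) =
      pfaffian (φ.submatrix i.succAbove i.succAbove) := by
    intro i
    rw [← pfaffian_map, ← Matrix.submatrix_map, hf]
  ext i j
  have hadj : φ.adjugate i j = f (G.adjugate i j) := by
    rw [← hf]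
    exact (congrFun (congrFun (RingHom.map_adjugate f G) i) j).symm
  rw [hadj, hG, Matrix.vecMulVec_apply]
  simp only [Y, map_mul, map_pow, map_neg, map_one, hfpf]

/-- **Cayley's theorem**: the determinant of an alternating matrix of even size is the square of
its Pfaffian. -/
theorem det_eq_pfaffian_sq {R : Type} [CommRing R] {n : ℕ}
    (A : Matrix (Fin (2 * n)) (Fin (2 * n)) R) (halt : A.transpose = -A)
    (hdiag : ∀ i, A i i = 0) : A.det = pfaffian A ^ 2 := by
  induction n generalizing R with
  | zero => simp [pfaffian, pfPerms]
  | succ n ih =>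
    change Matrix (Fin (2 * n + 1 + 1)) (Fin (2 * n + 1 + 1)) R at A
    have hadj := adjugate_of_det_submatrix_eq_sq n (fun B hB hB0 => ih B hB hB0)
      (A.submatrix Fin.succ Fin.succ) (submatrix_transpose_eq_neg halt _) fun _ => hdiag _
    have hneg : ∀ i : Fin (2 * n + 1), A i.succ 0 = -A 0 i.succ := fun i =>
      congrFun (congrFun halt 0) i.succ
    refine (det_eq_neg_sum_adjugate_submatrix_succ A (hdiag _)).trans ?_
    rw [pfaffian_succ A, sq, Finset.sum_mul_sum, ← Finset.sum_neg_distrib]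
    refine Finset.sum_congr rfl fun j _ => ?_
    rw [← Finset.sum_neg_distrib]
    refine Finset.sum_congr rfl fun i _ => ?_
    rw [hadj, hneg, Matrix.vecMulVec_apply]
    ring

/-- For an alternating matrix `φ` of odd size `2n+1`, the adjugate of `φ` equals
`Y * Yᵀ`, where `Y i = (-1)^i * Pf(φ(i))` (zero-based indexing); in particular every
entry of `adj(φ)` is a product of two signed principal Pfaffians of size `2n`. -/
theorem adjugate_alternating_eq_vecMulVec_pfaffians
    {R : Type*} [CommRing R] {n : ℕ} (φ : Matrix (Fin (2*n+1)) (Fin (2*n+1)) R)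
    (halt : φ.transpose = -φ) (hdiag : ∀ i, φ i i = 0) :
    φ.adjugate = Matrix.vecMulVec (fun (i : Fin (2*n+1)) => (-1 : R) ^ (i : ℕ) * pfaffian (φ.submatrix i.succAbove i.succAbove)) (fun (i : Fin (2*n+1)) => (-1 : R) ^ (i : ℕ) * pfaffian (φ.submatrix i.succAbove i.succAbove)) := by
  exact adjugate_of_det_submatrix_eq_sq n
    (fun A hA hA0 => det_eq_pfaffian_sq A hA hA0) φ halt hdiag
end

section
/- A finite free complex F_• of length n over a commutative Noetherian ring A is acyclic if and only if its localization (F_•)_P is acyclic for every prime ideal P with depth(A_P) < n. -/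
universe u

open CategoryTheory Abelian

section ExtVanishing

variable {R : Type u} [CommRing R] {L N Q : Type u} [AddCommGroup L] [Module R L]
  [AddCommGroup N] [Module R N] [AddCommGroup Q] [Module R Q]

lemma subsingleton_ext_of_subsingleton (K : ModuleCat.{u} R) [Subsingleton N] (t : ℕ) :
    Subsingleton (Ext K (ModuleCat.of R N) t) := by
  refine subsingleton_of_forall_eq 0 fun e ↦ ?_
  have h : 𝟙 (ModuleCat.of R N) = 0 :=
    (Limits.IsZero.iff_id_eq_zero _).mp (ModuleCat.isZero_of_subsingleton _)
  rw [← e.comp_mk₀_id, h, Ext.mk₀_zero, Ext.comp_zero]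

/-- In a short exact sequence `0 → L → N → Q → 0`, vanishing of `Ext` into the outer terms
forces vanishing of `Ext` into the middle one. -/
lemma subsingleton_ext_middle (K : ModuleCat.{u} R) (f : L →ₗ[R] N) (g : N →ₗ[R] Q)
    (hfg : Function.Exact f g) (hf : Function.Injective f) (hg : Function.Surjective g) (t : ℕ)
    (hL : Subsingleton (Ext K (ModuleCat.of R L) t))
    (hQ : Subsingleton (Ext K (ModuleCat.of R Q) t)) :
    Subsingleton (Ext K (ModuleCat.of R N) t) := by
  let S := ModuleCat.shortComplexOfCompEqZero f g hfg.linearMap_comp_eq_zero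
  have hS : S.ShortExact := ModuleCat.shortComplex_shortExact S hfg hf hg
  refine subsingleton_of_forall_eq 0 fun e ↦ ?_
  obtain ⟨e', rfl⟩ := Ext.covariant_sequence_exact₂ K hS (n := t) e (hQ.elim _ _)
  rw [hL.elim e' 0, Ext.zero_comp]

/-- In a short exact sequence `0 → L → N → Q → 0`, vanishing of `Ext` into `N` and, one degree
higher, into `L` forces vanishing of `Ext` into `Q`. -/
lemma subsingleton_ext_right (K : ModuleCat.{u} R) (f : L →ₗ[R] N) (g : N →ₗ[R] Q)
    (hfg : Function.Exact f g) (hf : Function.Injective f) (hg : Function.Surjective g) (t : ℕ)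
    (hN : Subsingleton (Ext K (ModuleCat.of R N) t))
    (hL : Subsingleton (Ext K (ModuleCat.of R L) (t + 1))) :
    Subsingleton (Ext K (ModuleCat.of R Q) t) := by
  let S := ModuleCat.shortComplexOfCompEqZero f g hfg.linearMap_comp_eq_zero
  have hS : S.ShortExact := ModuleCat.shortComplex_shortExact S hfg hf hg
  refine subsingleton_of_forall_eq 0 fun e ↦ ?_
  obtain ⟨e', rfl⟩ := Ext.covariant_sequence_exact₃ K hS e rfl (hL.elim _ _)
  rw [hN.elim e' 0, Ext.zero_comp]

lemma subsingleton_ext_fin_fun (K : ModuleCat.{u} R) (t : ℕ)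
    (hR : Subsingleton (Ext K (ModuleCat.of R R) t)) (m : ℕ) :
    Subsingleton (Ext K (ModuleCat.of R (Fin m → R)) t) := by
  induction m with
  | zero => exact subsingleton_ext_of_subsingleton K t
  | succ m ih =>
    refine subsingleton_ext_middle K (LinearMap.single R (fun _ : Fin (m + 1) ↦ R) 0)
      (LinearMap.funLeft R R Fin.succ) (fun x ↦ ?_)
      (Pi.single_injective (M := fun _ : Fin (m + 1) ↦ R) 0)
      (LinearMap.funLeft_surjective_of_injective R R _ (Fin.succ_injective m)) t hR ih
    constructor
    · intro hx
      refine ⟨x 0, funext fun k ↦ ?_⟩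
      refine Fin.cases (by simp) (fun k ↦ ?_) k
      simpa using (congrFun hx k).symm
    · rintro ⟨y, rfl⟩
      ext k
      simp

end ExtVanishing

section Complex

variable {R : Type u} [CommRing R] {rk : ℕ → ℕ}
  (d : ∀ j, (Fin (rk (j + 1)) → R) →ₗ[R] (Fin (rk j) → R))

/-- Along the exact part of a finite free complex, the modules of boundaries inherit vanishing of
`Ext` from the ring. -/
lemma subsingleton_ext_range (K : ModuleCat.{u} R) {n i : ℕ} (hrk : ∀ j, n < j → rk j = 0)
    (hK : ∀ t < n, Subsingleton (Ext K (ModuleCat.of R R) t))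
    (hex : ∀ j, i < j → LinearMap.range (d (j + 1)) = LinearMap.ker (d j))
    (k j t : ℕ) (hk : n ≤ j + k) (hij : i < j) (htj : t ≤ j) :
    Subsingleton (Ext K (ModuleCat.of R (LinearMap.range (d j))) t) := by
  induction k generalizing j t with
  | zero =>
    have : IsEmpty (Fin (rk (j + 1))) := by rw [hrk (j + 1) (by omega)]; infer_instance
    have : Subsingleton (LinearMap.range (d j)) :=
      (d j).surjective_rangeRestrict.subsingleton
    exact subsingleton_ext_of_subsingleton K t
  | succ k ih =>
    by_cases hj : n ≤ j + k
    · exact ih j t hj hij htj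
    refine subsingleton_ext_right K (LinearMap.range (d (j + 1))).subtype (d j).rangeRestrict
      ?_ (Submodule.subtype_injective _) (d j).surjective_rangeRestrict t
      (subsingleton_ext_fin_fun K t (hK t (by omega)) _)
      (ih (j + 1) (t + 1) (by omega) (by omega) (by omega))
    rw [LinearMap.exact_iff, Submodule.range_subtype, LinearMap.ker_rangeRestrict, hex j hij]

/-- Over a Noetherian local ring of depth at least `n`, the cokernel of a differential whose
tail is a free resolution of length less than `n` has no nonzero element killed by the maximal
ideal. -/
lemma mem_range_of_forall_smul_mem_range [IsLocalRing R] [IsNoetherianRing R] {n i : ℕ}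
    (hrk : ∀ j, n < j → rk j = 0) (hin : i < n)
    (hdepth : ∃ rs : List R, rs.length = n ∧ (∀ x ∈ rs, x ∈ IsLocalRing.maximalIdeal R) ∧
      RingTheory.Sequence.IsRegular R rs)
    (hex : ∀ j, i < j → LinearMap.range (d (j + 1)) = LinearMap.ker (d j))
    (z : Fin (rk (i + 1)) → R)
    (hz : ∀ r ∈ IsLocalRing.maximalIdeal R, r • z ∈ LinearMap.range (d (i + 1))) :
    z ∈ LinearMap.range (d (i + 1)) := by
  obtain ⟨rs, hlen, hmem, hreg⟩ := hdepth
  let k := R ⧸ IsLocalRing.maximalIdeal R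
  let K := ModuleCat.of R k
  have hK : ∀ t < n, Subsingleton (Ext K (ModuleCat.of R R) t) := by
    rw [← hlen]
    refine ModuleCat.subsingleton_ext_of_exists_isRegular (IsLocalRing.maximalIdeal R) K ?_
      (ModuleCat.of R R) ?_ rs hmem hreg
    · rw [Module.support_eq_zeroLocus, Ideal.annihilator_quotient]
    · simpa [lt_top_iff_ne_top] using (IsLocalRing.maximalIdeal.isMaximal R).ne_top
  have hC : Subsingleton (Ext K (ModuleCat.of R (_ ⧸ LinearMap.range (d (i + 1)))) 0) := by
    refine subsingleton_ext_right K (LinearMap.range (d (i + 1))).subtype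
      (LinearMap.range (d (i + 1))).mkQ ?_ (Submodule.subtype_injective _)
      (Submodule.mkQ_surjective _) 0 (subsingleton_ext_fin_fun K 0 (hK 0 (by omega)) _)
      (subsingleton_ext_range d K hrk hK hex n (i + 1) 1 (by omega) (by omega) (by omega))
    rw [LinearMap.exact_iff, Submodule.range_subtype, Submodule.ker_mkQ]
  have hhom : Subsingleton (k →ₗ[R] (_ ⧸ LinearMap.range (d (i + 1)))) :=
    ((Ext.addEquiv₀ (X := K) (Y := ModuleCat.of R (_ ⧸ LinearMap.range (d (i + 1))))).trans
      ModuleCat.homAddEquiv).symm.subsingleton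
  let φ : k →ₗ[R] (_ ⧸ LinearMap.range (d (i + 1))) :=
    Submodule.liftQ (IsLocalRing.maximalIdeal R)
      (LinearMap.toSpanSingleton R _ (Submodule.Quotient.mk z)) fun r hr ↦ by
        rw [LinearMap.mem_ker, LinearMap.toSpanSingleton_apply, ← Submodule.Quotient.mk_smul,
          Submodule.Quotient.mk_eq_zero]
        exact hz r hr
  have hφ : φ (Submodule.Quotient.mk 1) = 0 := by rw [hhom.elim φ 0, LinearMap.zero_apply]
  rwa [Submodule.liftQ_apply, LinearMap.toSpanSingleton_apply, one_smul,
    Submodule.Quotient.mk_eq_zero] at hφ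

end Complex

section Localization

variable {A B : Type*} [CommRing A] [CommRing B] [Algebra A B] (S : Submonoid A)
  [IsLocalization S B] {a b c : ℕ}

lemma exists_smul_eq_algebraMap_comp (w : Fin a → B) :
    ∃ s ∈ S, ∃ v : Fin a → A, algebraMap A B s • w = algebraMap A B ∘ v := by
  obtain ⟨s, hs⟩ := IsLocalization.exist_integer_multiples_of_finite S w
  choose v hv using hs
  refine ⟨s, s.2, v, funext fun k ↦ ?_⟩
  simp [hv, Algebra.smul_def]

lemma exists_smul_eq_zero_of_algebraMap_comp (v : Fin a → A) (hv : algebraMap A B ∘ v = 0) :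
    ∃ s ∈ S, s • v = 0 := by
  have h : ∀ k, ∃ s : S, (s : A) * v k = 0 := fun k ↦
    (IsLocalization.map_eq_zero_iff S B (v k)).mp (congrFun hv k)
  choose s hs using h
  refine ⟨∏ k, (s k : A), S.prod_mem fun k _ ↦ (s k).2, funext fun k ↦ ?_⟩
  obtain ⟨c, hc⟩ := Finset.dvd_prod_of_mem (fun k ↦ (s k : A)) (Finset.mem_univ k)
  rw [Pi.smul_apply, smul_eq_mul, hc, mul_right_comm, hs, zero_mul, Pi.zero_apply]

lemma mulVec_algebraMap_comp (N : Matrix (Fin a) (Fin b) A) (v : Fin b → A) :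
    (N.map (algebraMap A B)).mulVec (algebraMap A B ∘ v) = algebraMap A B ∘ N.mulVec v := by
  ext k
  exact (RingHom.map_mulVec (algebraMap A B) N v k).symm

lemma algebraMap_comp_mem_range {N : Matrix (Fin a) (Fin b) A} {y : Fin a → A}
    (hy : y ∈ LinearMap.range N.mulVecLin) :
    algebraMap A B ∘ y ∈ LinearMap.range (N.map (algebraMap A B)).mulVecLin := by
  obtain ⟨v, rfl⟩ := hy
  exact ⟨algebraMap A B ∘ v, mulVec_algebraMap_comp N v⟩

lemma exists_smul_mem_range (N : Matrix (Fin a) (Fin b) A) (y : Fin a → A)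
    (hy : algebraMap A B ∘ y ∈ LinearMap.range (N.map (algebraMap A B)).mulVecLin) :
    ∃ s ∈ S, s • y ∈ LinearMap.range N.mulVecLin := by
  obtain ⟨w, hw⟩ := hy
  obtain ⟨s, hs, v, hv⟩ := exists_smul_eq_algebraMap_comp S w
  have h : algebraMap A B ∘ (s • y - N.mulVec v) = 0 := by
    have h₁ : algebraMap A B ∘ N.mulVec v = algebraMap A B s • (algebraMap A B ∘ y) := by
      rw [← mulVec_algebraMap_comp, ← hv, Matrix.mulVec_smul, ← hw, Matrix.mulVecLin_apply]
    ext k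
    have := congrFun h₁ k
    simp only [Function.comp_apply, Pi.smul_apply, smul_eq_mul] at this
    simp [this]
  obtain ⟨t, ht, hts⟩ := exists_smul_eq_zero_of_algebraMap_comp S _ h
  refine ⟨t * s, S.mul_mem ht hs, t • v, ?_⟩
  rw [smul_sub, sub_eq_zero] at hts
  rw [Matrix.mulVecLin_apply, Matrix.mulVec_smul, mul_smul, hts]

lemma range_mulVecLin_map_eq_ker (T : Submonoid A) [IsLocalization T B]
    (N : Matrix (Fin a) (Fin b) A)
    (N' : Matrix (Fin b) (Fin c) A)
    (h : LinearMap.range N'.mulVecLin = LinearMap.ker N.mulVecLin) :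
    LinearMap.range (N'.map (algebraMap A B)).mulVecLin =
      LinearMap.ker (N.map (algebraMap A B)).mulVecLin := by
  apply le_antisymm
  · rintro _ ⟨w, rfl⟩
    obtain ⟨s, hs, v, hv⟩ := exists_smul_eq_algebraMap_comp T w
    have h₀ : N.mulVec (N'.mulVec v) = 0 :=
      h.le (LinearMap.mem_range_self N'.mulVecLin v)
    refine (Submodule.smul_mem_iff_of_isUnit _ (IsLocalization.map_units B ⟨s, hs⟩)).mp ?_
    rw [LinearMap.mem_ker, ← map_smul, hv, Matrix.mulVecLin_apply, Matrix.mulVecLin_apply,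
      mulVec_algebraMap_comp, mulVec_algebraMap_comp, h₀]
    ext k
    simp
  · intro w hw
    obtain ⟨s, hs, v, hv⟩ := exists_smul_eq_algebraMap_comp T w
    have h₀ : algebraMap A B ∘ N.mulVec v = 0 := by
      rw [← mulVec_algebraMap_comp, ← hv, Matrix.mulVec_smul]
      rw [LinearMap.mem_ker, Matrix.mulVecLin_apply] at hw
      rw [hw, smul_zero]
    obtain ⟨t, ht, hts⟩ := exists_smul_eq_zero_of_algebraMap_comp T _ h₀
    have hker : t • v ∈ LinearMap.range N'.mulVecLin := by
      rw [h, LinearMap.mem_ker, Matrix.mulVecLin_apply, Matrix.mulVec_smul, hts]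
    refine (Submodule.smul_mem_iff_of_isUnit _
      (IsLocalization.map_units B ⟨t * s, T.mul_mem ht hs⟩)).mp ?_
    convert algebraMap_comp_mem_range (B := B) hker using 1
    rw [map_mul, mul_smul, hv]
    ext k
    simp

end Localization

/-- The Buchsbaum–Eisenbud acyclicity criterion: a finite free complex
`0 → F_n → ... → F_1 → F_0` (encoded by ranks `rk` vanishing above `n` and matrices
`M i : F_{i+1} → F_i` with `M i * M (i+1) = 0`) over a commutative Noetherian ring
`A` is acyclic (exact in all positive homological degrees) if and only if its
localization at every prime `P` such that `depth (A_P) < n` (i.e. the maximal ideal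
of `A_P` contains no regular sequence of length `n`) is acyclic. -/
theorem buchsbaum_eisenbud_acyclicity_criterion
    {A : Type} [CommRing A] [IsNoetherianRing A] (n : ℕ) (rk : ℕ → ℕ)
    (hrk : ∀ i, n < i → rk i = 0)
    (M : ∀ i : ℕ, Matrix (Fin (rk i)) (Fin (rk (i+1))) A)
    (hcomplex : ∀ i, M i * M (i+1) = 0) :
    (∀ i : ℕ, LinearMap.range (M (i+1)).mulVecLin = LinearMap.ker (M i).mulVecLin)
    ↔ ∀ (P : Ideal A) [P.IsPrime],
        (¬ ∃ rs : List (Localization.AtPrime P), rs.length = n ∧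
            (∀ x ∈ rs, x ∈ IsLocalRing.maximalIdeal (Localization.AtPrime P)) ∧
            RingTheory.Sequence.IsRegular (Localization.AtPrime P) rs) →
        ∀ i : ℕ,
          LinearMap.range ((M (i+1)).map (algebraMap A (Localization.AtPrime P))).mulVecLin
            = LinearMap.ker ((M i).map (algebraMap A (Localization.AtPrime P))).mulVecLin := by
  constructor
  · intro h P _ _ i
    exact range_mulVecLin_map_eq_ker P.primeCompl _ _ (h i)
  intro h
  by_contra! hne
  obtain ⟨i, hi, hmax⟩ : ∃ i,
      LinearMap.range (M (i+1)).mulVecLin ≠ LinearMap.ker (M i).mulVecLin ∧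
      ∀ j, i < j → LinearMap.range (M (j+1)).mulVecLin = LinearMap.ker (M j).mulVecLin := by
    have hbdd : ∀ i, LinearMap.range (M (i+1)).mulVecLin ≠ LinearMap.ker (M i).mulVecLin →
        i ≤ n := fun i hi ↦ by
      by_contra! hlt
      have : IsEmpty (Fin (rk (i + 1))) := by rw [hrk (i + 1) (by omega)]; infer_instance
      exact hi (Subsingleton.elim _ _)
    obtain ⟨i₀, hi₀⟩ := hne
    classical
    let p (i : ℕ) : Prop := LinearMap.range (M (i+1)).mulVecLin ≠ LinearMap.ker (M i).mulVecLin
    refine ⟨Nat.findGreatest p n, Nat.findGreatest_spec (P := p) (hbdd i₀ hi₀) hi₀, fun j hj ↦ ?_⟩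
    by_contra hj'
    exact absurd (Nat.le_findGreatest (P := p) (hbdd j hj') hj') hj.not_ge
  have hin : i < n := by
    by_contra! hle
    have : IsEmpty (Fin (rk (i + 1))) := by rw [hrk (i + 1) (by omega)]; infer_instance
    exact hi (Subsingleton.elim _ _)
  have hle : LinearMap.range (M (i+1)).mulVecLin ≤ LinearMap.ker (M i).mulVecLin := by
    rw [LinearMap.range_le_ker_iff, ← Matrix.mulVecLin_mul, hcomplex, Matrix.mulVecLin_zero]
  obtain ⟨z₀, hz₀, hz₀'⟩ := SetLike.exists_of_lt (lt_of_le_of_ne hle hi)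
  let H := (LinearMap.ker (M i).mulVecLin) ⧸
    (LinearMap.range (M (i+1)).mulVecLin).submoduleOf (LinearMap.ker (M i).mulVecLin)
  have : Nontrivial H := Submodule.Quotient.nontrivial_iff.mpr fun htop ↦
    hz₀' (show (⟨z₀, hz₀⟩ : LinearMap.ker (M i).mulVecLin) ∈
      (LinearMap.range (M (i+1)).mulVecLin).submoduleOf _ from htop ▸ Submodule.mem_top)
  obtain ⟨P, hP⟩ := associatedPrimes.nonempty A H
  obtain ⟨hprime, x, hx⟩ := isAssociatedPrime_iff.mp hP
  obtain ⟨⟨z, hz⟩, rfl⟩ := Submodule.Quotient.mk_surjective _ x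
  have hPz (r : A) : r ∈ P ↔ r • z ∈ LinearMap.range (M (i+1)).mulVecLin := by
    rw [hx, Submodule.mem_colon_singleton, Submodule.mem_bot, ← Submodule.Quotient.mk_smul,
      Submodule.Quotient.mk_eq_zero]
    rfl
  have hnot : algebraMap A (Localization.AtPrime P) ∘ z ∉
      LinearMap.range ((M (i+1)).map (algebraMap A (Localization.AtPrime P))).mulVecLin := by
    intro hmem
    obtain ⟨s, hs, hsz⟩ := exists_smul_mem_range P.primeCompl _ z hmem
    exact hs ((hPz s).mpr hsz)
  by_cases hdepth : ∃ rs : List (Localization.AtPrime P), rs.length = n ∧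
      (∀ x ∈ rs, x ∈ IsLocalRing.maximalIdeal (Localization.AtPrime P)) ∧
      RingTheory.Sequence.IsRegular (Localization.AtPrime P) rs
  · have : IsNoetherianRing (Localization.AtPrime P) :=
      IsLocalization.isNoetherianRing P.primeCompl _ inferInstance
    refine hnot (mem_range_of_forall_smul_mem_range
      (fun j ↦ ((M j).map (algebraMap A (Localization.AtPrime P))).mulVecLin) hrk hin hdepth
      (fun j hj ↦ range_mulVecLin_map_eq_ker P.primeCompl _ _ (hmax j hj)) _ fun r hr ↦ ?_)
    rw [← Localization.AtPrime.map_eq_maximalIdeal] at hr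
    have hmap : P.map (algebraMap A (Localization.AtPrime P)) ≤
        (LinearMap.range ((M (i+1)).map (algebraMap A (Localization.AtPrime P))).mulVecLin).comap
          (LinearMap.toSpanSingleton _ _ (algebraMap A (Localization.AtPrime P) ∘ z)) := by
      refine Ideal.map_le_iff_le_comap.mpr fun r hr ↦ ?_
      rw [Ideal.mem_comap, Submodule.mem_comap, LinearMap.toSpanSingleton_apply]
      convert algebraMap_comp_mem_range (B := Localization.AtPrime P) ((hPz r).mp hr) using 1
      ext k
      simp
    exact hmap hr
  · apply hnot
    rw [h P hdepth i, LinearMap.mem_ker, Matrix.mulVecLin_apply, mulVec_algebraMap_comp]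
    rw [LinearMap.mem_ker, Matrix.mulVecLin_apply] at hz
    rw [hz]
    ext k
    simp
end
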